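/- Let π and ρ be standard irreducible pairs on a finite alphabet A with ρ ∈ E(π). Then Λ(ρ) = Λ(π). -/

import Mathlib

open Equiv

/-- A (labeled) pair on alphabet `A`: two bijections from `A` to positions.
Positions are `Fin (Fintype.card A)`, 0-indexed: position `j : Fin N`
corresponds to the position `j+1 ∈ {1,…,N}` of the paper. -/
abbrev RPair (A : Type*) [Fintype A] := Bool → (A ≃ Fin (Fintype.card A))

variable {A : Type*} [Fintype A]

/-- Irreducibility: `π₁(π₀⁻¹({1,…,k})) = {1,…,k}` only for `k = N`. -/
def PairIrreducible (π : RPair A) : Prop :=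
  ∀ k : Fin (Fintype.card A),
    (∀ x : A, π false x ≤ k → π true x ≤ k) → (k : ℕ) + 1 = Fintype.card A

/-- Type-ε right Rauzy induction sends `π` to `π'`.  Here `zc = π_ε⁻¹(N)` and
`zo = π_{1-ε}⁻¹(N)` are characterized as the letters of maximal position. -/
def RightMove (π π' : RPair A) : Prop :=
  ∃ ε : Bool, ∃ zc zo : A,
    (∀ x : A, π ε x ≤ π ε zc) ∧
    (∀ x : A, π (!ε) x ≤ π (!ε) zo) ∧
    π' ε = π ε ∧
    (∀ b : A, π (!ε) b ≤ π (!ε) zc → π' (!ε) b = π (!ε) b) ∧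
    ((π' (!ε) zo : ℕ) = (π (!ε) zc : ℕ) + 1) ∧
    (∀ b : A, ¬ π (!ε) b ≤ π (!ε) zc → b ≠ zo → (π' (!ε) b : ℕ) = (π (!ε) b : ℕ) + 1)

/-- Type-ε left Rauzy induction sends `π` to `π'`.  Here `ac = π_ε⁻¹(1)` and
`ao = π_{1-ε}⁻¹(1)` are characterized as the letters of minimal position. -/
def LeftMove (π π' : RPair A) : Prop :=
  ∃ ε : Bool, ∃ ac ao : A,
    (∀ x : A, π ε ac ≤ π ε x) ∧
    (∀ x : A, π (!ε) ao ≤ π (!ε) x) ∧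
    π' ε = π ε ∧
    (∀ b : A, π (!ε) ac ≤ π (!ε) b → π' (!ε) b = π (!ε) b) ∧
    ((π' (!ε) ao : ℕ) = (π (!ε) ac : ℕ) - 1) ∧
    (∀ b : A, ¬ π (!ε) ac ≤ π (!ε) b → b ≠ ao → (π' (!ε) b : ℕ) = (π (!ε) b : ℕ) - 1)

/-- The Rauzy class `R(π)`: pairs reachable by right Rauzy inductions. -/
def RClass (π : RPair A) : Set (RPair A) := {ρ | Relation.ReflTransGen RightMove π ρ}

/-- The extended Rauzy class `E(π)`: pairs reachable by left and right Rauzy inductions. -/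
def EClass (π : RPair A) : Set (RPair A) :=
  {ρ | Relation.ReflTransGen (fun x y => RightMove x y ∨ LeftMove x y) π ρ}

/-- `π ∘ ν = (π₀ ∘ ν, π₁ ∘ ν)`. -/
def pairRename (π : RPair A) (ν : Equiv.Perm A) : RPair A := fun ε => ν.trans (π ε)

/-- The renaming set `G(π) = {ν : π ∘ ν ∈ E(π)}`. -/
def renamings (π : RPair A) : Set (Equiv.Perm A) := {ν | pairRename π ν ∈ EClass π}

/-- The non-labeled permutation `π₁ ∘ π₀⁻¹`. -/
def nonlabeled (π : RPair A) : Equiv.Perm (Fin (Fintype.card A)) :=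
  (π false).symm.trans (π true)

/-- The position `1` (smallest). -/
def posFirst (A : Type*) [Fintype A] [Nonempty A] : Fin (Fintype.card A) :=
  ⟨0, Fintype.card_pos⟩

/-- The position `N` (largest). -/
def posLast (A : Type*) [Fintype A] [Nonempty A] : Fin (Fintype.card A) :=
  ⟨Fintype.card A - 1, Nat.sub_lt Fintype.card_pos Nat.one_pos⟩

/-- A pair is standard if `π₀(π₁⁻¹(1)) = π₁(π₀⁻¹(1)) = N`. -/
def PairStandard [Nonempty A] (π : RPair A) : Prop :=
  π false ((π true).symm (posFirst A)) = posLast A ∧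
  π true ((π false).symm (posFirst A)) = posLast A

/-- `S` is the permutation `S(π)` of the paper. -/
def IsS [Nonempty A] (π : RPair A) (S : Equiv.Perm A) : Prop :=
  ∀ b : A,
    (π true b = posFirst A → S b = (π false).symm (posFirst A)) ∧
    (π true b ≠ posFirst A →
      (((π true b : ℕ) = (π true ((π false).symm (posLast A)) : ℕ) + 1 →
        (π false (S b) : ℕ) = (π false ((π true).symm (posLast A)) : ℕ) + 1) ∧
      ((π true b : ℕ) ≠ (π true ((π false).symm (posLast A)) : ℕ) + 1 →
        (π false (S b) : ℕ) =
          (π false ((π true).symm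
            ⟨(π true b : ℕ) - 1,
              Nat.lt_of_le_of_lt (Nat.sub_le _ _) (π true b).isLt⟩) : ℕ) + 1)))

/-- The marked letter `X(π) = π₀⁻¹(1)`. -/
def XOf [Nonempty A] (π : RPair A) : A := (π false).symm (posFirst A)

/-- `Q` is the permutation `Q(π)` of the paper (constructed from `S = S(π)`). -/
def IsQ [Nonempty A] (π : RPair A) (S Q : Equiv.Perm A) : Prop :=
  Q (XOf π) = XOf π ∧
  ∀ b : A, b ≠ XOf π →
    (S b = XOf π → Q b = S (S b)) ∧ (S b ≠ XOf π → Q b = S b)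

/-- `Λ`: the multiset of cardinalities of the orbits of `Q` on `A ∖ {X}`
(for `Q` fixing `X`): the nontrivial cycle lengths of `Q` together with one `1`
for each fixed point of `Q` other than `X`. -/
def lamOf [DecidableEq A] (Q : Equiv.Perm A) : Multiset ℕ :=
  Q.cycleType + Multiset.replicate ((Finset.univ.filter fun a => Q a = a).card - 1) 1

/-- The centralizer `Z(π)` of `(X(π), Q(π))`. -/
def ZOf [Nonempty A] (π : RPair A) (Q : Equiv.Perm A) : Set (Equiv.Perm A) :=
  {ν | ν (XOf π) = XOf π ∧ ν⁻¹ * Q * ν = Q}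

/-!
Close up each row `π_ε` to a cycle `c_ε` of `A ∪ {∞}`, reading the row from left to right and
then passing through `∞`. Then `S(π)` is the first return map to `A` of `c₀ c₁⁻¹`, and
`Q(π) = S(π) (a₁ a₀)`, where `a_ε = c_ε(∞)` is the first letter of row `ε`. Writing
`z_ε = c_ε⁻¹(∞)` for its last letter, `Q(π)` is therefore conjugate, up to the fixed point `∞`, to
`W(c₀, c₁) = (a₀ a₁) c₀ (z₀ z₁) c₁⁻¹`.

Up to conjugation and inversion, `W(c₀, c₁)` is unchanged when the rows are exchanged and when both
cycles are inverted, that is, when both rows are read backwards. This reduces all four inductions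
to the right induction that modifies row 1. That one fixes `a₀`, `a₁`, `c₀`, and also
`c₁ (z₀ z₁)`: in both pairs this is `c₁` with its arc from the letter following `z₀` up to the last
letter closed up into a cycle of its own. Hence it fixes `W(c₀, c₁)`.
-/

section Permutations

variable {X : Type*} [DecidableEq X]

/-- The permutation `W(c, d) = (a₀ a₁) c (z₀ z₁) d⁻¹`, where `a₀, a₁` are the images and `z₀, z₁`
the preimages of the base point `o` under `c, d`. For the two row cycles of a pair and `o = ∞` its
cycle type encodes `Λ`. -/
def cappedQuotient (o : X) (c d : Perm X) : Perm X :=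
  swap (c o) (d o) * c * swap (c⁻¹ o) (d⁻¹ o) * d⁻¹

theorem cappedQuotient_congr_right {o : X} {c d d' : Perm X} (himage : d' o = d o)
    (hcut : d' * swap (c⁻¹ o) (d'⁻¹ o) = d * swap (c⁻¹ o) (d⁻¹ o)) :
    cappedQuotient o c d' = cappedQuotient o c d := by
  have hcut_inv : swap (c⁻¹ o) (d'⁻¹ o) * d'⁻¹ = swap (c⁻¹ o) (d⁻¹ o) * d⁻¹ := by
    simpa only [mul_inv_rev, swap_inv] using congrArg (·⁻¹) hcut
  simp only [cappedQuotient, mul_assoc, himage, hcut_inv]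

variable [Fintype X]

theorem cycleType_mul_comm (σ τ : Perm X) : (σ * τ).cycleType = (τ * σ).cycleType := by
  rw [← Perm.cycleType_conj (σ := τ * σ) (τ := σ), ← mul_assoc, mul_inv_cancel_right]

theorem cycleType_cappedQuotient_comm (o : X) (c d : Perm X) :
    (cappedQuotient o d c).cycleType = (cappedQuotient o c d).cycleType := by
  have hinv : (cappedQuotient o d c)⁻¹ =
      c * swap (c⁻¹ o) (d⁻¹ o) * d⁻¹ * swap (c o) (d o) := by
    simp only [cappedQuotient, mul_inv_rev, swap_inv, inv_inv, mul_assoc, swap_comm]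
  rw [← Perm.cycleType_inv, hinv, cycleType_mul_comm]
  simp only [cappedQuotient, mul_assoc]

theorem cycleType_cappedQuotient_inv (o : X) (c d : Perm X) :
    (cappedQuotient o c⁻¹ d⁻¹).cycleType = (cappedQuotient o c d).cycleType := by
  have hinv : (cappedQuotient o c⁻¹ d⁻¹)⁻¹ =
      d⁻¹ * (swap (c o) (d o) * c * swap (c⁻¹ o) (d⁻¹ o)) := by
    simp only [cappedQuotient, mul_inv_rev, swap_inv, inv_inv, mul_assoc]
  rw [← Perm.cycleType_inv, hinv, cycleType_mul_comm]
  rfl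

theorem cycleType_cappedQuotient (o : X) (c d : Perm X) :
    (cappedQuotient o c d).cycleType =
      (swap o ((c * d⁻¹) o) * (c * d⁻¹) * swap (c o) (d o)).cycleType := by
  have hpush : c * swap (c⁻¹ o) (d⁻¹ o) = swap o ((c * d⁻¹) o) * c := by
    simp [mul_swap_eq_swap_mul]
  rw [cappedQuotient, mul_assoc (swap _ _), hpush, cycleType_mul_comm _ (swap (c o) (d o))]
  simp only [mul_assoc]

theorem cycleType_optionCongr (σ : Perm X) : Perm.cycleType σ.optionCongr = σ.cycleType := by
  have hextend : σ.optionCongr = σ.extendDomain (optionIsSomeEquiv X).symm := by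
    ext1 (_ | x)
    · rw [Perm.extendDomain_apply_not_subtype _ _ (by simp)]
      rfl
    · exact (Perm.extendDomain_apply_image σ (optionIsSomeEquiv X).symm x).symm
  rw [hextend, Perm.cycleType_extendDomain]

theorem lamOf_eq_of_cycleType_eq {σ τ : Perm X} (h : σ.cycleType = τ.cycleType) :
    lamOf σ = lamOf τ := by
  have card_fixed (υ : Perm X) :
      (Finset.univ.filter fun x => υ x = x).card = Fintype.card X - υ.cycleType.sum := by
    rw [Perm.sum_cycleType, ← Finset.card_compl]
    congr 1
    ext x
    simp
  rw [lamOf, lamOf, card_fixed, card_fixed, h]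

end Permutations

section Rows

variable {B : Type*} {n : ℕ} {f f' : B ≃ Fin n} {b b' w z : B}

/-- The positions `0, 1, …, n` of `∞` (encoded as `none`) followed by the letters of a row `f`. -/
def rowPosition (f : B ≃ Fin n) : Option B ≃ Fin (n + 1) :=
  f.optionCongr.trans (finSuccEquiv n).symm

theorem rowPosition_none : (rowPosition f none : ℕ) = 0 := by
  simp [rowPosition]

theorem rowPosition_some : (rowPosition f (some b) : ℕ) = f b + 1 := by
  simp [rowPosition]

/-- The cycle `∞ → f⁻¹(0) → f⁻¹(1) → ⋯ → f⁻¹(n - 1) → ∞` closing up a row `f`. -/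
def rowCycle (f : B ≃ Fin n) : Perm (Option B) :=
  (rowPosition f).symm.permCongr (finRotate (n + 1))

theorem rowCycle_eq_iff {x y : Option B} :
    rowCycle f x = y ↔
      (rowPosition f y : ℕ) =
        if (rowPosition f x : ℕ) = n then 0 else (rowPosition f x : ℕ) + 1 := by
  rw [rowCycle, permCongr_apply, Equiv.symm_apply_eq, eq_comm, symm_symm, Fin.ext_iff,
    coe_finRotate]
  simp only [Fin.ext_iff, Fin.val_last]

theorem rowCycle_some_eq_some_iff : rowCycle f (some b) = some b' ↔ (f b' : ℕ) = f b + 1 := by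
  have := (f b').isLt
  rw [rowCycle_eq_iff, rowPosition_some, rowPosition_some]
  grind

theorem rowCycle_none_eq_some_iff : rowCycle f none = some b ↔ (f b : ℕ) = 0 := by
  have := (f b).isLt
  rw [rowCycle_eq_iff, rowPosition_some, rowPosition_none]
  grind

theorem rowCycle_some_eq_none_iff : rowCycle f (some b) = none ↔ (f b : ℕ) + 1 = n := by
  rw [rowCycle_eq_iff, rowPosition_some, rowPosition_none]
  grind

theorem rowCycle_none_eq_none_iff : rowCycle f none = none ↔ n = 0 := by
  rw [rowCycle_eq_iff, rowPosition_none]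
  grind

theorem rowCycle_reverse (f : B ≃ Fin n) : rowCycle (f.trans Fin.revPerm) = (rowCycle f)⁻¹ := by
  refine eq_inv_of_mul_eq_one_left (Equiv.ext fun x => ?_)
  rw [Perm.mul_apply, Perm.one_apply]
  rcases x with _ | b <;> rcases hx : rowCycle f _ with _ | b' <;>
    simp only [rowCycle_none_eq_none_iff, rowCycle_none_eq_some_iff, rowCycle_some_eq_none_iff,
      rowCycle_some_eq_some_iff, trans_apply, Fin.revPerm_apply, Fin.val_rev] at hx ⊢ <;>
    omega

/-- The row `f'` arises from the row `f` by moving its last letter `z` right behind `w`. This is how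
a right Rauzy induction modifies a row. -/
structure IsRightShift (f f' : B ≃ Fin n) (w z : B) : Prop where
  isLast : ∀ b, f b ≤ f z
  apply_of_le : ∀ b, f b ≤ f w → f' b = f b
  apply_last : (f' z : ℕ) = f w + 1
  apply_of_not_le : ∀ b, ¬ f b ≤ f w → b ≠ z → (f' b : ℕ) = f b + 1

theorem val_add_one_eq_of_isLast (hz : ∀ b, f b ≤ f z) : (f z : ℕ) + 1 = n := by
  have hlt := (f z).isLt
  have hle := hz (f.symm ⟨n - 1, by omega⟩)
  simp only [apply_symm_apply, Fin.le_def] at hle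
  omega

theorem exists_val_eq (f : B ≃ Fin n) {i : ℕ} (hi : i < n) : ∃ b, (f b : ℕ) = i :=
  ⟨f.symm ⟨i, hi⟩, by rw [apply_symm_apply]⟩

theorem eq_of_val_eq (h : (f b : ℕ) = f b') : b = b' :=
  f.injective (Fin.ext h)

theorem inv_rowCycle_none (hz : ∀ b, f b ≤ f z) : (rowCycle f)⁻¹ none = some z := by
  rw [Perm.inv_eq_iff_eq, eq_comm, rowCycle_some_eq_none_iff]
  exact val_add_one_eq_of_isLast hz

namespace IsRightShift

theorem val_lt (h : IsRightShift f f' w z) : (f w : ℕ) + 1 < n :=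
  h.apply_last ▸ (f' z).isLt

theorem rowCycle_none (h : IsRightShift f f' w z) : rowCycle f' none = rowCycle f none := by
  obtain ⟨a, ha⟩ := exists_val_eq f (i := 0) (by have := h.val_lt; omega)
  have ha' : f' a = f a := h.apply_of_le a (Fin.le_def.2 (by omega))
  rw [rowCycle_none_eq_some_iff.2 ha, rowCycle_none_eq_some_iff, ha', ha]

theorem rowCycle_apply_left (h : IsRightShift f f' w z) : rowCycle f' (some w) = some z := by
  rw [rowCycle_some_eq_some_iff, h.apply_last, h.apply_of_le w le_rfl]

theorem rowCycle_apply_of_lt (h : IsRightShift f f' w z) (hb : f b < f w) :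
    rowCycle f' (some b) = rowCycle f (some b) := by
  rw [Fin.lt_def] at hb
  obtain ⟨d, hd⟩ := exists_val_eq f (i := f b + 1) (by have := h.val_lt; omega)
  rw [rowCycle_some_eq_some_iff.2 hd, rowCycle_some_eq_some_iff,
    h.apply_of_le b (Fin.le_def.2 (by omega)), h.apply_of_le d (Fin.le_def.2 (by omega)), hd]

variable [DecidableEq B]

theorem rowCycle_apply_last (h : IsRightShift f f' w z) :
    rowCycle f' (some z) = swap (some z) none (rowCycle f (some w)) := by
  have hz := val_add_one_eq_of_isLast h.isLast
  obtain ⟨d, hd⟩ := exists_val_eq f (i := f w + 1) h.val_lt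
  rw [rowCycle_some_eq_some_iff.2 hd]
  by_cases hdz : d = z
  · subst hdz
    rw [swap_apply_left, rowCycle_some_eq_none_iff, h.apply_last, ← hd, hz]
  · rw [swap_apply_of_ne_of_ne (by simpa using hdz) (Option.some_ne_none d),
      rowCycle_some_eq_some_iff, h.apply_last, h.apply_of_not_le d (by omega) hdz, hd]

theorem rowCycle_apply_of_gt (h : IsRightShift f f' w z) (hb : f w < f b) (hbz : b ≠ z) :
    rowCycle f' (some b) = swap (some z) none (rowCycle f (some b)) := by
  have hz := val_add_one_eq_of_isLast h.isLast
  have hb' : (f' b : ℕ) = f b + 1 := h.apply_of_not_le b (not_le.2 hb) hbz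
  rw [Fin.lt_def] at hb
  obtain ⟨d, hd⟩ := exists_val_eq f (i := f b + 1) (hb' ▸ (f' b).isLt)
  rw [rowCycle_some_eq_some_iff.2 hd]
  by_cases hdz : d = z
  · subst hdz
    rw [swap_apply_left, rowCycle_some_eq_none_iff, hb', ← hd, hz]
  · rw [swap_apply_of_ne_of_ne (by simpa using hdz) (Option.some_ne_none d),
      rowCycle_some_eq_some_iff, hb', h.apply_of_not_le d (by omega) hdz, hd]

theorem swap_rowCycle_apply (h : IsRightShift f f' w z) (x : Option B) :
    swap (some z) none (rowCycle f' x) = swap (rowCycle f (some w)) none (rowCycle f x) := by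
  have hz := val_add_one_eq_of_isLast h.isLast
  have eq_of_unchanged {y : Option B} (hy : y ≠ some w) (hne : rowCycle f y ≠ none)
      (heq : rowCycle f' y = rowCycle f y) :
      swap (some z) none (rowCycle f' y) = swap (rowCycle f (some w)) none (rowCycle f y) := by
    rw [swap_apply_of_ne_of_ne ((rowCycle f).injective.ne hy) hne, ← h.rowCycle_apply_left,
      swap_apply_of_ne_of_ne ((rowCycle f').injective.ne hy) (heq ▸ hne), heq]
  have ne_none {b : B} (hb : b ≠ z) : rowCycle f (some b) ≠ none := fun hnone =>
    hb (eq_of_val_eq (f := f) (by rw [rowCycle_some_eq_none_iff] at hnone; omega))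
  rcases x with _ | b
  · have hn : n ≠ 0 := by omega
    exact eq_of_unchanged (by simp) (by rwa [Ne, rowCycle_none_eq_none_iff]) h.rowCycle_none
  rcases lt_trichotomy (f b) (f w) with hlt | heq | hgt
  · have hbz : b ≠ z := fun hbz => absurd (h.isLast w) (not_le.2 (hbz ▸ hlt))
    have hbw : some b ≠ some w := fun hbw => hlt.ne (congrArg f (Option.some_injective _ hbw))
    exact eq_of_unchanged hbw (ne_none hbz) (h.rowCycle_apply_of_lt hlt)
  · rw [f.injective heq, h.rowCycle_apply_left, swap_apply_left, swap_apply_left]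
  · by_cases hbz : b = z
    · rw [hbz, h.rowCycle_apply_last, swap_apply_self, rowCycle_some_eq_none_iff.2 hz,
        swap_apply_right]
    · have hbw : some b ≠ some w := fun hbw => hgt.ne' (congrArg f (Option.some_injective _ hbw))
      rw [h.rowCycle_apply_of_gt hgt hbz, swap_apply_self,
        swap_apply_of_ne_of_ne ((rowCycle f).injective.ne hbw) (ne_none hbz)]

theorem rowCycle_mul_swap (h : IsRightShift f f' w z) :
    rowCycle f' * swap (some w) ((rowCycle f')⁻¹ none) =
      rowCycle f * swap (some w) ((rowCycle f)⁻¹ none) := by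
  ext1 x
  simpa [mul_swap_eq_swap_mul, h.rowCycle_apply_left] using h.swap_rowCycle_apply x

end IsRightShift

end Rows

section Pairs

/-- The pair with both rows read backwards, which exchanges left and right Rauzy induction. -/
def pairReverse (π : RPair A) : RPair A := fun ε => (π ε).trans Fin.revPerm

theorem RightMove.exists_isRightShift {π π' : RPair A} (h : RightMove π π') :
    ∃ ε w z, (∀ x, π ε x ≤ π ε w) ∧ π' ε = π ε ∧ IsRightShift (π !ε) (π' !ε) w z := by
  obtain ⟨ε, w, z, hw, hz, hrow, hle, hlast, hnle⟩ := h
  exact ⟨ε, w, z, hw, hrow, hz, hle, hlast, hnle⟩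

theorem pair_ext_of_not {π π' : RPair A} (ε : Bool) (h : π' ε = π ε) (h' : π' (!ε) = π (!ε)) :
    π' = π := by
  funext δ
  rcases Bool.eq_or_eq_not δ ε with rfl | rfl
  · exact h
  · exact h'

theorem LeftMove.eq_or_rightMove_pairReverse {π π' : RPair A} (h : LeftMove π π') :
    π' = π ∨ RightMove (pairReverse π) (pairReverse π') := by
  obtain ⟨ε, w, a, hw, ha, hrow, hle, hfirst, hnle⟩ := h
  have hlt (x : A) : (π (!ε) x : ℕ) < Fintype.card A := (π (!ε) x).isLt
  -- If both rows start with the same letter, `LeftMove` evaluates `0 - 1` to `0`.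
  by_cases hwa : π (!ε) w = π (!ε) a
  · exact Or.inl (pair_ext_of_not ε hrow (Equiv.ext fun b => hle b (hwa ▸ ha b)))
  have hwa_lt : (π (!ε) a : ℕ) < π (!ε) w := Fin.lt_def.1 (lt_of_le_of_ne (ha w) (Ne.symm hwa))
  refine Or.inr ⟨ε, w, a, fun x => ?_, fun x => ?_, ?_, fun b hb => ?_, ?_, fun b hb hba => ?_⟩
  · simpa [pairReverse] using hw x
  · simpa [pairReverse] using ha x
  · simp only [pairReverse, hrow]
  · have hb' : π (!ε) w ≤ π (!ε) b := by simpa [pairReverse] using hb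
    simp only [pairReverse, trans_apply, hle b hb']
  · simp only [pairReverse, trans_apply, Fin.revPerm_apply, Fin.val_rev, hfirst]
    have := hlt w
    omega
  · have hb' : ¬ π (!ε) w ≤ π (!ε) b := by simpa [pairReverse] using hb
    have hab : (π (!ε) a : ℕ) < π (!ε) b :=
      Fin.lt_def.1 (lt_of_le_of_ne (ha b) fun h => hba ((π (!ε)).injective h.symm))
    simp only [pairReverse, trans_apply, Fin.revPerm_apply, Fin.val_rev, hnle b hb' hba]
    have := hlt b
    omega

variable [DecidableEq A]

/-- The permutation of `A ∪ {∞}` that is conjugate to `Q(π)` extended by the fixed point `∞`. -/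
def pairQuotient (π : RPair A) : Perm (Option A) :=
  cappedQuotient none (rowCycle (π false)) (rowCycle (π true))

theorem cycleType_pairQuotient_eq (π : RPair A) (ε : Bool) :
    (pairQuotient π).cycleType =
      (cappedQuotient none (rowCycle (π ε)) (rowCycle (π !ε))).cycleType := by
  cases ε
  · rfl
  · exact cycleType_cappedQuotient_comm _ _ _

theorem cycleType_pairQuotient_pairReverse (π : RPair A) :
    (pairQuotient (pairReverse π)).cycleType = (pairQuotient π).cycleType := by
  simp only [pairQuotient, pairReverse, rowCycle_reverse, cycleType_cappedQuotient_inv]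

theorem RightMove.cycleType_pairQuotient {π π' : RPair A} (h : RightMove π π') :
    (pairQuotient π').cycleType = (pairQuotient π).cycleType := by
  obtain ⟨ε, w, z, hw, hrow, hshift⟩ := h.exists_isRightShift
  rw [cycleType_pairQuotient_eq π' ε, cycleType_pairQuotient_eq π ε, hrow,
    cappedQuotient_congr_right hshift.rowCycle_none]
  rw [inv_rowCycle_none hw]
  exact hshift.rowCycle_mul_swap

theorem LeftMove.cycleType_pairQuotient {π π' : RPair A} (h : LeftMove π π') :
    (pairQuotient π').cycleType = (pairQuotient π).cycleType := by
  rcases h.eq_or_rightMove_pairReverse with rfl | hreverse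
  · rfl
  · rw [← cycleType_pairQuotient_pairReverse π', hreverse.cycleType_pairQuotient,
      cycleType_pairQuotient_pairReverse]

theorem cycleType_pairQuotient_of_mem_EClass {π ρ : RPair A} (h : ρ ∈ EClass π) :
    (pairQuotient ρ).cycleType = (pairQuotient π).cycleType := by
  induction h with
  | refl => rfl
  | tail _ hmove ih =>
    exact (hmove.elim RightMove.cycleType_pairQuotient LeftMove.cycleType_pairQuotient).trans ih

end Pairs

section ReturnMaps

variable [Nonempty A] {π : RPair A} {S Q : Perm A}

theorem rowCycle_none_eq_some_symm_posFirst (f : A ≃ Fin (Fintype.card A)) :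
    rowCycle f none = some (f.symm (posFirst A)) := by
  rw [rowCycle_none_eq_some_iff, apply_symm_apply, posFirst]

theorem rowCycle_some_symm_posLast_eq_none (f : A ≃ Fin (Fintype.card A)) :
    rowCycle f (some (f.symm (posLast A))) = none := by
  rw [rowCycle_some_eq_none_iff, apply_symm_apply, posLast]
  exact Nat.sub_add_cancel Fintype.card_pos

theorem IsS.eq_removeNone (hS : IsS π S) :
    S = removeNone (rowCycle (π false) * (rowCycle (π true))⁻¹) := by
  set τ := rowCycle (π false) * (rowCycle (π true))⁻¹ with hτ
  have apply_of_pred {x y : Option A} (hxy : rowCycle (π true) x = y) :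
      τ y = rowCycle (π false) x := by
    rw [hτ, Perm.mul_apply, Perm.inv_eq_iff_eq.2 hxy.symm]
  have eq_of_apply {b d : A} (hbd : τ (some b) = some d) : removeNone τ b = d :=
    Option.some_injective _ ((removeNone_some τ ⟨d, hbd⟩).trans hbd)
  ext1 b
  obtain ⟨hfirst, hrest⟩ := hS b
  by_cases hb : π true b = posFirst A
  · have hpred : rowCycle (π true) none = some b := by
      rw [rowCycle_none_eq_some_symm_posFirst, ← hb, symm_apply_apply]
    rw [eq_of_apply ((apply_of_pred hpred).trans (rowCycle_none_eq_some_symm_posFirst _)),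
      hfirst hb]
  obtain ⟨hcut, hgeneric⟩ := hrest hb
  by_cases hb_cut : (π true b : ℕ) = π true ((π false).symm (posLast A)) + 1
  · have hnone : τ (some b) = none :=
      (apply_of_pred (rowCycle_some_eq_some_iff.2 hb_cut)).trans
        (rowCycle_some_symm_posLast_eq_none _)
    have hreturn : τ none = some (S b) :=
      (apply_of_pred (rowCycle_some_symm_posLast_eq_none _)).trans
        (rowCycle_some_eq_some_iff.2 (hcut hb_cut))
    exact Option.some_injective _ (hreturn.symm.trans (removeNone_none τ hnone).symm)
  · have hb_pos : (π true b : ℕ) ≠ 0 := fun h => hb (Fin.ext h)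
    have hpred : rowCycle (π true) (some ((π true).symm ⟨π true b - 1, by omega⟩)) = some b := by
      rw [rowCycle_some_eq_some_iff, apply_symm_apply]
      exact (Nat.succ_pred_eq_of_ne_zero hb_pos).symm
    have hsucc := rowCycle_some_eq_some_iff.2 (hgeneric hb_cut)
    exact (eq_of_apply ((apply_of_pred hpred).trans hsucc)).symm

theorem IsQ.eq_mul_swap [DecidableEq A] (hS : IsS π S) (hQ : IsQ π S Q) :
    Q = S * swap ((π true).symm (posFirst A)) (XOf π) := by
  set a := (π true).symm (posFirst A)
  have hSa : S a = XOf π := (hS a).1 (apply_symm_apply _ _)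
  obtain ⟨hfix, hmove⟩ := hQ
  ext1 b
  rw [Perm.mul_apply]
  by_cases hbX : b = XOf π
  · rw [hbX, swap_apply_right, hfix, hSa]
  by_cases hba : b = a
  · rw [hba, swap_apply_left, (hmove a (hba ▸ hbX)).1 hSa, hSa]
  · have hSb : S b ≠ XOf π := fun h => hba (S.injective (h.trans hSa.symm))
    rw [swap_apply_of_ne_of_ne hba hbX, (hmove b hbX).2 hSb]

theorem IsQ.cycleType_eq [DecidableEq A] (hS : IsS π S) (hQ : IsQ π S Q) :
    Q.cycleType = (pairQuotient π).cycleType := by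
  rw [← cycleType_optionCongr, hQ.eq_mul_swap hS, pairQuotient, cycleType_cappedQuotient,
    ← map_equiv_removeNone, ← hS.eq_removeNone, rowCycle_none_eq_some_symm_posFirst,
    rowCycle_none_eq_some_symm_posFirst, swap_comm, ← optionCongr_swap]
  exact congrArg Perm.cycleType (optionCongr_trans _ _)

end ReturnMaps

theorem stmt5_general [DecidableEq A] [Nonempty A] {π ρ : RPair A} (hρ : ρ ∈ EClass π)
    {S S' Q Q' : Perm A} (hS : IsS π S) (hS' : IsS ρ S') (hQ : IsQ π S Q) (hQ' : IsQ ρ S' Q') :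
    lamOf Q' = lamOf Q := by
  refine lamOf_eq_of_cycleType_eq ?_
  rw [hQ'.cycleType_eq hS', hQ.cycleType_eq hS, cycleType_pairQuotient_of_mem_EClass hρ]

/-- if `π, ρ` are standard irreducible pairs with `ρ ∈ E(π)`, then
`Λ(ρ) = Λ(π)`. -/
theorem stmt5 {A : Type*} [Fintype A] [DecidableEq A] [Nonempty A]
    (hN : 2 ≤ Fintype.card A) (π ρ : RPair A) (hπ : PairIrreducible π)
    (hπs : PairStandard π) (hρs : PairStandard ρ) (hρ : ρ ∈ EClass π)
    (S S' Q Q' : Equiv.Perm A)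
    (hS : IsS π S) (hS' : IsS ρ S') (hQ : IsQ π S Q) (hQ' : IsQ ρ S' Q') :
    lamOf Q' = lamOf Q := by
  exact stmt5_general hρ hS hS' hQ hQ'
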